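/- Let G be a finite simple graph and set f(G) = χ(G) − ω(G). If f(G) ≤ 4, then the number of vertices of G satisfies |V(G)| ≥ χ(G) + 2·f(G). -/

import Mathlib

open SimpleGraph

/-!
Strong induction on the order `n` of `G` shows that `n ≤ χ + 7` forces `3χ ≤ n + 2ω`, that is,
`χ + 2(χ - ω) ≤ n`. One may delete an independent triple or a vertex whose removal does not lower
`χ`, and one may split `G` along a partition into two fully joined parts, because `χ`, `ω` and `n`
are then additive up to inequalities in the right direction. In the remaining case `G` is
vertex-critical, `Gᶜ` is connected and `Gᶜ` has no triangle. Colourings of `G` are then matchings of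
`Gᶜ`, and Tutte's theorem gives Gallai's bound `2χ ≤ n + 1`, so that `χ ≤ 8`; the few possible
values of `ω` are excluded by the Erdős–Szekeres bound `n < (ω + 2).choose 2`.
-/

section Chromatic

variable {V : Type*} {G : SimpleGraph V}

lemma toNat_chromaticNumber_le_iff [Finite V] {n : ℕ} :
    G.chromaticNumber.toNat ≤ n ↔ G.Colorable n :=
  ⟨G.colorable_chromaticNumber_of_fintype.mono,
    fun h ↦ ENat.toNat_le_of_le_natCast h.chromaticNumber_le⟩

lemma toNat_chromaticNumber_le_card [Finite V] (G : SimpleGraph V) :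
    G.chromaticNumber.toNat ≤ Nat.card V := by
  have := Fintype.ofFinite V
  rw [toNat_chromaticNumber_le_iff, Nat.card_eq_fintype_card]
  exact G.colorable_of_fintype

lemma colorable_add_of_induce {A : Set V} {a b : ℕ} (hA : (G.induce A).Colorable a)
    (hAc : (G.induce Aᶜ).Colorable b) : G.Colorable (a + b) := by
  classical
  obtain ⟨f⟩ := hA
  obtain ⟨g⟩ := hAc
  let h : G.Coloring (Fin a ⊕ Fin b) :=
    Coloring.mk (fun v ↦ if hv : v ∈ A then .inl (f ⟨v, hv⟩) else .inr (g ⟨v, hv⟩))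
      fun {v w} hvw heq ↦ by
        split_ifs at heq with hv hw hw
        · exact f.valid (v := ⟨v, hv⟩) (w := ⟨w, hw⟩) hvw (Sum.inl.inj heq)
        · exact g.valid (v := ⟨v, hv⟩) (w := ⟨w, hw⟩) hvw (Sum.inr.inj heq)
  simpa only [Fintype.card_sum, Fintype.card_fin] using h.colorable

lemma toNat_chromaticNumber_le_add_induce [Finite V] (G : SimpleGraph V) (A : Set V) :
    G.chromaticNumber.toNat ≤
      (G.induce A).chromaticNumber.toNat + (G.induce Aᶜ).chromaticNumber.toNat :=
  toNat_chromaticNumber_le_iff.2 <| colorable_add_of_induce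
    (colorable_chromaticNumber_of_fintype _) (colorable_chromaticNumber_of_fintype _)

lemma colorable_one_induce {A : Set V} (hA : G.IsIndepSet A) : (G.induce A).Colorable 1 := by
  rw [colorable_one_iff, eq_bot_iff_forall_not_adj]
  exact fun v w hvw ↦ hA v.2 w.2 (Subtype.coe_ne_coe.2 hvw.ne) hvw

lemma toNat_chromaticNumber_le_induce_compl_add_one [Finite V] {A : Set V}
    (hA : G.IsIndepSet A) :
    G.chromaticNumber.toNat ≤ (G.induce Aᶜ).chromaticNumber.toNat + 1 := by
  rw [toNat_chromaticNumber_le_iff, add_comm]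
  exact colorable_add_of_induce (colorable_one_induce hA) (colorable_chromaticNumber_of_fintype _)

lemma cliqueFree_cliqueNum_add_one [Finite V] (G : SimpleGraph V) :
    G.CliqueFree (G.cliqueNum + 1) := fun s hs ↦ by
  have := hs.isClique.card_le_cliqueNum
  grind [hs.card_eq]

lemma cliqueNum_induce_add_cliqueNum_induce_compl_le [Finite V] {A : Set V}
    (hA : ∀ v ∈ A, ∀ w ∉ A, G.Adj v w) :
    (G.induce A).cliqueNum + (G.induce Aᶜ).cliqueNum ≤ G.cliqueNum := by
  classical
  obtain ⟨s, hs⟩ := (G.induce A).exists_isNClique_cliqueNum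
  obtain ⟨t, ht⟩ := (G.induce Aᶜ).exists_isNClique_cliqueNum
  rw [isNClique_induce_iff] at hs ht
  set S := s.map (.subtype (· ∈ A))
  set T := t.map (.subtype (· ∈ Aᶜ))
  have hSA (v) (hv : v ∈ S) : v ∈ A := Finset.property_of_mem_map_subtype s hv
  have hTA (v) (hv : v ∈ T) : v ∉ A := Finset.property_of_mem_map_subtype t hv
  have hdisj : Disjoint S T := Finset.disjoint_left.2 fun v hvS hvT ↦ hTA v hvT (hSA v hvS)
  have hclique : G.IsClique (S ∪ T : Finset V) := by
    rw [Finset.coe_union]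
    refine Set.pairwise_union.2 ⟨hs.isClique, ht.isClique, fun v hv w hw _ ↦ ?_⟩
    have hvw := hA v (hSA v hv) w (hTA w hw)
    exact ⟨hvw, hvw.symm⟩
  rw [← hs.card_eq, ← ht.card_eq, ← Finset.card_union_of_disjoint hdisj]
  exact hclique.card_le_cliqueNum

lemma exists_forall_adj_of_not_preconnected_compl (h : ¬Gᶜ.Preconnected) :
    ∃ A : Set V, A.Nonempty ∧ Aᶜ.Nonempty ∧ ∀ v ∈ A, ∀ w ∉ A, G.Adj v w := by
  simp only [Preconnected, not_forall] at h
  obtain ⟨x, y, hxy⟩ := h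
  refine ⟨{v | Gᶜ.Reachable x v}, ⟨x, .rfl⟩, ⟨y, hxy⟩, fun v hv w hw ↦ ?_⟩
  by_contra hvw
  have hne : v ≠ w := ne_of_mem_of_not_mem hv hw
  exact hw (hv.trans (Adj.reachable ⟨hne, hvw⟩))

lemma compl_induce (G : SimpleGraph V) (s : Set V) : (G.induce s)ᶜ = Gᶜ.induce s := by
  ext v w
  simp [Subtype.ext_iff]

lemma indepSetFree_induce {n : ℕ} (hG : G.IndepSetFree n) (s : Set V) :
    (G.induce s).IndepSetFree n := by
  rw [← cliqueFree_compl, compl_induce]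
  exact ((cliqueFree_compl G).2 hG).comap ⟨(Embedding.induce s).toCopy⟩

end Chromatic

section Ramsey

variable {V : Type*} [Finite V] {G : SimpleGraph V}

lemma ncard_le_ncard_inter_neighborSet_add (G : SimpleGraph V) (s : Set V) (v : V) :
    s.ncard ≤ (s ∩ G.neighborSet v).ncard + (s ∩ Gᶜ.neighborSet v).ncard + 1 := by
  have hcover : s ⊆ insert v (s ∩ G.neighborSet v ∪ s ∩ Gᶜ.neighborSet v) := by
    intro w hw
    by_cases hvw : G.Adj v w <;> grind [compl_adj, mem_neighborSet]
  calc s.ncard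
    _ ≤ (insert v (s ∩ G.neighborSet v ∪ s ∩ Gᶜ.neighborSet v)).ncard := Set.ncard_le_ncard hcover
    _ ≤ (s ∩ G.neighborSet v ∪ s ∩ Gᶜ.neighborSet v).ncard + 1 := Set.ncard_insert_le _ _
    _ ≤ (s ∩ G.neighborSet v).ncard + (s ∩ Gᶜ.neighborSet v).ncard + 1 := by
      gcongr
      exact Set.ncard_union_le _ _

lemma ncard_lt_choose_of_cliqueFreeOn {s : Set V} {k l : ℕ} (hk : G.CliqueFreeOn s (k + 1))
    (hl : Gᶜ.CliqueFreeOn s (l + 1)) : s.ncard < (k + l).choose k := by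
  rcases s.eq_empty_or_nonempty with rfl | ⟨v, hv⟩
  · simpa using Nat.choose_pos (Nat.le_add_right k l)
  have hv_clique {H : SimpleGraph V} : ¬H.CliqueFreeOn s 1 := fun h ↦
    lt_irrefl 1 (H.cliqueFreeOn_singleton.1 (h.subset H (Set.singleton_subset_iff.2 hv)))
  match k, l with
  | 0, _ => exact absurd hk hv_clique
  | _, 0 => exact absurd hl hv_clique
  | k + 1, l + 1 =>
    calc s.ncard
      _ ≤ (s ∩ G.neighborSet v).ncard + (s ∩ Gᶜ.neighborSet v).ncard + 1 :=
        ncard_le_ncard_inter_neighborSet_add G s v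
      _ < (k + (l + 1)).choose k + (k + 1 + l).choose (k + 1) := by
        have hadj := ncard_lt_choose_of_cliqueFreeOn (hk.of_succ G hv)
          (hl.subset _ Set.inter_subset_left)
        have hnonadj := ncard_lt_choose_of_cliqueFreeOn (hk.subset _ Set.inter_subset_left)
          (hl.of_succ Gᶜ hv)
        lia
      _ = (k + 1 + (l + 1)).choose (k + 1) := by
        rw [show k + 1 + l = k + (l + 1) by lia, show k + 1 + (l + 1) = k + (l + 1) + 1 by lia,
          Nat.choose_succ_succ]
termination_by k + l

lemma card_lt_choose_of_cliqueFree {k l : ℕ} (hk : G.CliqueFree (k + 1))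
    (hl : G.IndepSetFree (l + 1)) : Nat.card V < (k + l).choose k := by
  rw [← Set.ncard_univ]
  exact ncard_lt_choose_of_cliqueFreeOn hk.cliqueFreeOn ((cliqueFree_compl G).2 hl).cliqueFreeOn

end Ramsey

section OddComponents

variable {V W α : Type*} {G : SimpleGraph V}

lemma ncard_oddComponents_of_preconnected [Finite V] (hG : G.Preconnected) :
    G.oddComponents.ncard = Nat.card V % 2 := by
  have := hG.subsingleton_connectedComponent
  have hle : G.oddComponents.ncard ≤ 1 := Set.ncard_le_one_of_subsingleton _
  have hodd := G.odd_ncard_oddComponents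
  grind

lemma ncard_oddComponents_congr {H : SimpleGraph W} (e : G ≃g H) :
    G.oddComponents.ncard = H.oddComponents.ncard := by
  have hcard (C : G.ConnectedComponent) :
      C.supp.ncard = (e.connectedComponentEquiv C).supp.ncard := by
    rw [← Nat.card_coe_set_eq, ← Nat.card_coe_set_eq]
    exact Nat.card_congr (ConnectedComponent.isoEquivSupp e C)
  exact Set.ncard_congr' (e.connectedComponentEquiv.subtypeEquiv fun C ↦ by simp [hcard C])

lemma sum_ncard_inter_colorClass [Finite V] [Fintype α] (f : G.Coloring α) (s : Set V) :
    ∑ i, (s ∩ f.colorClass i).ncard = s.ncard := by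
  classical
  have := Fintype.ofFinite V
  rw [Set.ncard_eq_toFinset_card', Finset.card_eq_sum_card_fiberwise
    (f := f) (t := Finset.univ) (fun _ _ ↦ Finset.mem_coe.2 (Finset.mem_univ _))]
  refine Finset.sum_congr rfl fun i _ ↦ ?_
  rw [Set.ncard_eq_toFinset_card']
  congr 1
  ext v
  simp only [Finset.mem_filter, Set.mem_toFinset, Set.mem_inter_iff, and_congr_right_iff]
  exact fun _ ↦ Iff.rfl

lemma colorClass_subset_supp_compl (f : G.Coloring α) {i : α} {C : Gᶜ.ConnectedComponent} {v : V}
    (hvC : v ∈ C.supp) (hv : v ∈ f.colorClass i) : f.colorClass i ⊆ C.supp := by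
  intro w hw
  rcases eq_or_ne v w with rfl | hne
  · exact hvC
  · have hadj : Gᶜ.Adj v w := (isClique_compl G).2 (f.isIndepSet_colorClass i) hv hw hne
    exact (C.mem_supp_congr_adj hadj).1 hvC

lemma exists_odd_colorClass_subset [Finite V] [Finite α] (f : G.Coloring α)
    {C : Gᶜ.ConnectedComponent} (hC : Odd C.supp.ncard) :
    ∃ i, Odd (f.colorClass i).ncard ∧ f.colorClass i ⊆ C.supp := by
  have := Fintype.ofFinite α
  obtain ⟨i, hi⟩ : ∃ i, Odd (C.supp ∩ f.colorClass i).ncard := by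
    contrapose! hC
    rw [Nat.not_odd_iff_even, ← sum_ncard_inter_colorClass f]
    exact Finset.even_sum _ fun i _ ↦ Nat.not_odd_iff_even.1 (hC i)
  obtain ⟨v, hvC, hv⟩ := Set.nonempty_of_ncard_ne_zero hi.pos.ne'
  have hsub := colorClass_subset_supp_compl f hvC hv
  rw [Set.inter_eq_right.2 hsub] at hi
  exact ⟨i, hi, hsub⟩

lemma ncard_oddComponents_compl_le [Finite V] [Finite α] (f : G.Coloring α) :
    Gᶜ.oddComponents.ncard ≤ {i | Odd (f.colorClass i).ncard}.ncard := by
  choose i hi hsub using fun C : Gᶜ.oddComponents ↦ exists_odd_colorClass_subset f C.2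
  refine Nat.card_le_card_of_injective (fun C ↦ (⟨i C, hi C⟩ : {i | Odd (f.colorClass i).ncard})) ?_
  intro C D hCD
  obtain ⟨v, hv⟩ := Set.nonempty_of_ncard_ne_zero (hi C).pos.ne'
  have hvD : v ∈ f.colorClass (i D) := Subtype.mk.inj hCD ▸ hv
  exact Subtype.ext (ConnectedComponent.eq_of_common_vertex (hsub C hv) (hsub D hvD))

lemma ncard_lt_of_isIndepSet [Finite V] {n : ℕ} {s : Set V} (hG : G.IndepSetFree n)
    (hs : G.IsIndepSet s) : s.ncard < n := by
  by_contra! hn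
  obtain ⟨t, hts, ht⟩ := Set.exists_subset_card_eq hn
  have ht_fin : t.Finite := t.toFinite
  refine hG ht_fin.toFinset ⟨?_, ?_⟩
  · simpa using hs.mono hts
  · rw [← Set.ncard_eq_toFinset_card _ ht_fin, ht]

lemma ncard_oddComponents_compl_add_card_le [Finite V] {c : ℕ} (hα : G.IndepSetFree 3)
    (hc : G.Colorable c) : Gᶜ.oddComponents.ncard + Nat.card V ≤ 2 * c := by
  classical
  obtain ⟨f⟩ := hc
  have hclass (i : Fin c) : (f.colorClass i).ncard < 3 :=
    ncard_lt_of_isIndepSet hα (f.isIndepSet_colorClass i)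
  calc Gᶜ.oddComponents.ncard + Nat.card V
    _ ≤ {i | Odd (f.colorClass i).ncard}.ncard + (Set.univ : Set V).ncard := by
      rw [Set.ncard_univ]
      gcongr
      exact ncard_oddComponents_compl_le f
    _ = ∑ i, ((if Odd (f.colorClass i).ncard then 1 else 0) + (f.colorClass i).ncard) := by
      rw [Finset.sum_add_distrib, ← sum_ncard_inter_colorClass f, Finset.sum_boole,
        Set.ncard_eq_toFinset_card']
      simp
    _ ≤ ∑ i : Fin c, 2 := by
      gcongr with i
      have := hclass i
      grind
    _ = 2 * c := by simp [mul_comm]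

end OddComponents

section Matching

variable {V W : Type*} {G : SimpleGraph V}

lemma two_mul_card_edgeSet_of_isPerfectMatching [Finite V] {M : G.Subgraph}
    (hM : M.IsPerfectMatching) : 2 * Nat.card M.edgeSet = Nat.card V := by
  classical
  have := Fintype.ofFinite V
  have hdeg := Subgraph.isPerfectMatching_iff_forall_degree.1 hM
  have hsum := M.spanningCoe.sum_degrees_eq_twice_card_edges
  simp only [Subgraph.degree_spanningCoe, hdeg, Finset.sum_const, Finset.card_univ, smul_eq_mul,
    mul_one] at hsum
  rw [Nat.card_eq_fintype_card, Nat.card_eq_fintype_card, hsum, edgeFinset_card]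
  congr!

lemma colorable_of_isPerfectMatching_compl [Finite V] {M : Gᶜ.Subgraph}
    (hM : M.IsPerfectMatching) : G.Colorable (Nat.card V / 2) := by
  have f : G.Coloring M.edgeSet :=
    Coloring.mk (fun v ↦ hM.1.toEdge ⟨v, hM.2 v⟩) fun {v w} hvw heq ↦ by
      have hv := hM.1.mem_coe_toEdge (hM.2 v)
      have hw := hM.1.mem_coe_toEdge (hM.2 w)
      rw [← heq] at hw
      have hedge := (Sym2.mem_and_mem_iff hvw.ne).1 ⟨hv, hw⟩
      have hadj : M.Adj v w := by
        rw [← Subgraph.mem_edgeSet, ← hedge]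
        exact Subtype.prop _
      exact hadj.adj_sub.2 hvw
  have := Fintype.ofFinite M.edgeSet
  rw [← two_mul_card_edgeSet_of_isPerfectMatching hM, Nat.mul_div_cancel_left _ two_pos,
    Nat.card_eq_fintype_card]
  exact f.colorable

lemma exists_ncard_lt_ncard_oddComponents_induce_compl [Finite V]
    (hG : ∀ M : G.Subgraph, ¬M.IsPerfectMatching) :
    ∃ U : Set V, U.ncard < (G.induce Uᶜ).oddComponents.ncard := by
  obtain ⟨U, hU⟩ : ∃ U, G.IsTutteViolator U := by
    by_contra! hU
    obtain ⟨M, hM⟩ := tutte.2 hU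
    exact hG M hM
  have e : ((⊤ : G.Subgraph).deleteVerts U).coe ≃g G.induce Uᶜ :=
    { toEquiv := Equiv.setCongr (by simp [Set.compl_eq_univ_sdiff])
      map_rel_iff' := by
        rintro ⟨v, _, hv⟩ ⟨w, _, hw⟩
        simp [hv, hw] }
  exact ⟨U, hU.trans_eq (ncard_oddComponents_congr e)⟩

lemma preconnected_induce_compl_sum_bot {U : Set (V ⊕ W)} {w : W} (hw : Sum.inr w ∉ U) :
    ((G ⊕g (⊥ : SimpleGraph W))ᶜ.induce Uᶜ).Preconnected := by
  have hreach (x : (Uᶜ : Set (V ⊕ W))) :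
      ((G ⊕g (⊥ : SimpleGraph W))ᶜ.induce Uᶜ).Reachable ⟨Sum.inr w, hw⟩ x := by
    rcases eq_or_ne ⟨Sum.inr w, hw⟩ x with rfl | hne
    · rfl
    · refine Adj.reachable ?_
      obtain ⟨v | w', hx⟩ := x
      · simp
      · simpa using hne
  exact fun x y ↦ (hreach x).symm.trans (hreach y)

lemma nonempty_iso_induce_compl_sum {H : SimpleGraph W} {U : Set (V ⊕ W)}
    (hU : ∀ w, Sum.inr w ∈ U) :
    Nonempty (Gᶜ.induce (Sum.inl ⁻¹' U)ᶜ ≃g (G ⊕g H)ᶜ.induce Uᶜ) := by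
  let φ : Gᶜ.induce (Sum.inl ⁻¹' U)ᶜ ↪g (G ⊕g H)ᶜ.induce Uᶜ :=
    { toFun := fun v ↦ ⟨Sum.inl v, v.2⟩
      inj' := fun v w h ↦ by simpa [Subtype.ext_iff] using h
      map_rel_iff' := fun {v w} ↦
        show (G ⊕g H)ᶜ.Adj (.inl v) (.inl w) ↔ Gᶜ.Adj v w by simp }
  refine ⟨RelIso.ofSurjective φ ?_⟩
  rintro ⟨v | w, hv⟩
  · exact ⟨⟨v, hv⟩, rfl⟩
  · exact absurd (hU w) hv

lemma exists_ncard_add_two_mul_lt_of_not_colorable [Finite V] {c : ℕ} (hc : ¬G.Colorable c) :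
    ∃ U : Set V, U.ncard + 2 * c < Nat.card V + (Gᶜ.induce Uᶜ).oddComponents.ncard := by
  rcases lt_or_ge (2 * c) (Nat.card V) with hlt | hge
  · exact ⟨∅, by simpa using Nat.lt_add_right _ hlt⟩
  -- Adjoin vertices isolated in `G`, hence universal in `Gᶜ`, and apply Tutte's theorem there.
  obtain ⟨d, hd⟩ := Nat.exists_eq_add_of_le hge
  have hcard : Nat.card (V ⊕ Fin d) = 2 * c := by rw [Nat.card_sum, Nat.card_fin, hd]
  obtain ⟨U, hU⟩ := exists_ncard_lt_ncard_oddComponents_induce_compl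
    (G := (G ⊕g (⊥ : SimpleGraph (Fin d)))ᶜ) fun M hM ↦ hc <| by
      have hcol := (colorable_of_isPerfectMatching_compl hM).of_sum_left
      rwa [hcard, Nat.mul_div_cancel_left _ two_pos] at hcol
  have hUcard := Set.ncard_add_ncard_compl U
  have hinr (i : Fin d) : Sum.inr i ∈ U := by
    by_contra hi
    rw [ncard_oddComponents_of_preconnected (preconnected_induce_compl_sum_bot hi),
      Nat.card_coe_set_eq] at hU
    lia
  obtain ⟨e⟩ := nonempty_iso_induce_compl_sum (G := G) (H := ⊥) hinr
  have hrest := Nat.card_congr e.toEquiv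
  rw [Nat.card_coe_set_eq, Nat.card_coe_set_eq] at hrest
  have hUcard_left := Set.ncard_add_ncard_compl (Sum.inl ⁻¹' U : Set V)
  exact ⟨Sum.inl ⁻¹' U, by rw [ncard_oddComponents_congr e]; lia⟩

lemma two_mul_lt_card_of_critical [Finite V] {c : ℕ} (hα : G.IndepSetFree 3)
    (hconn : Gᶜ.Preconnected) (hcrit : ∀ v, (G.induce {v}ᶜ).Colorable c)
    (hc : ¬G.Colorable c) : 2 * c < Nat.card V := by
  obtain ⟨U, hU⟩ := exists_ncard_add_two_mul_lt_of_not_colorable hc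
  rcases U.eq_empty_or_nonempty with rfl | ⟨v, hv⟩
  · rw [Set.compl_empty, ncard_oddComponents_congr (induceUnivIso Gᶜ),
      ncard_oddComponents_of_preconnected hconn, Set.ncard_empty] at hU
    lia
  · have hvU : Uᶜ ⊆ {v}ᶜ := Set.compl_subset_compl.2 (Set.singleton_subset_iff.2 hv)
    have hcol : (G.induce Uᶜ).Colorable c := (hcrit v).of_hom (induceHomOfLE G hvU).toHom
    have hle := ncard_oddComponents_compl_add_card_le (indepSetFree_induce hα Uᶜ) hcol
    rw [compl_induce, Nat.card_coe_set_eq] at hle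
    have := U.ncard_add_ncard_compl
    lia

end Matching

section SmallOrder

variable {V : Type*} [Finite V] {G : SimpleGraph V}

lemma two_mul_chromaticNumber_le_of_critical (hα : G.IndepSetFree 3) (hconn : Gᶜ.Preconnected)
    (hcrit : ∀ v, (G.induce {v}ᶜ).chromaticNumber.toNat < G.chromaticNumber.toNat) :
    2 * G.chromaticNumber.toNat ≤ Nat.card V + 1 := by
  rcases hχ : G.chromaticNumber.toNat with _ | c
  · lia
  simp only [hχ, Nat.lt_succ_iff, toNat_chromaticNumber_le_iff] at hcrit
  have hc : ¬G.Colorable c := by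
    rw [← toNat_chromaticNumber_le_iff]
    lia
  have := two_mul_lt_card_of_critical hα hconn hcrit hc
  lia

lemma three_mul_chromaticNumber_le_of_critical (hα : G.IndepSetFree 3) (hconn : Gᶜ.Preconnected)
    (hcrit : ∀ v, (G.induce {v}ᶜ).chromaticNumber.toNat < G.chromaticNumber.toNat)
    (hV : Nat.card V ≤ G.chromaticNumber.toNat + 7) :
    3 * G.chromaticNumber.toNat ≤ Nat.card V + 2 * G.cliqueNum := by
  have hgallai := two_mul_chromaticNumber_le_of_critical hα hconn hcrit
  have hramsey : Nat.card V < (G.cliqueNum + 2).choose G.cliqueNum :=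
    card_lt_choose_of_cliqueFree (cliqueFree_cliqueNum_add_one G) hα
  by_contra! hlt
  have hω : G.cliqueNum ≤ 4 := by lia
  interval_cases G.cliqueNum <;> simp only [Nat.choose] at hramsey <;> lia

theorem three_mul_chromaticNumber_le (G : SimpleGraph V)
    (hV : Nat.card V ≤ G.chromaticNumber.toNat + 7) :
    3 * G.chromaticNumber.toNat ≤ Nat.card V + 2 * G.cliqueNum := by
  induction hn : Nat.card V using Nat.strong_induction_on generalizing V with | _ n ih
  subst hn
  have ih_induce {A : Set V} (hA : Aᶜ.Nonempty)
      (h : A.ncard ≤ (G.induce A).chromaticNumber.toNat + 7) :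
      3 * (G.induce A).chromaticNumber.toNat ≤ A.ncard + 2 * (G.induce A).cliqueNum :=
    ih _ (Set.ncard_lt_card (Set.nonempty_compl.1 hA)) _ (Nat.card_coe_set_eq A ▸ h)
      (Nat.card_coe_set_eq A)
  have of_delete {A : Set V} (hA : A.Nonempty)
      (hχ : 3 * G.chromaticNumber.toNat ≤ 3 * (G.induce Aᶜ).chromaticNumber.toNat + A.ncard) :
      3 * G.chromaticNumber.toNat ≤ Nat.card V + 2 * G.cliqueNum := by
    have hcard := A.ncard_add_ncard_compl
    have hω := G.cliqueNum_induce_le Aᶜ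
    have := ih_induce (A := Aᶜ) (by rwa [compl_compl]) (by lia)
    lia
  by_cases hα : ∃ t, G.IsNIndepSet 3 t
  · obtain ⟨t, ht⟩ := hα
    have ht3 : (t : Set V).ncard = 3 := by rw [Set.ncard_coe_finset, ht.card_eq]
    have hχ := toNat_chromaticNumber_le_induce_compl_add_one ht.isIndepSet
    exact of_delete (Set.nonempty_of_ncard_ne_zero (ht3 ▸ three_ne_zero)) (by lia)
  by_cases hcrit : ∃ v, G.chromaticNumber.toNat ≤ (G.induce {v}ᶜ).chromaticNumber.toNat
  · obtain ⟨v, hv⟩ := hcrit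
    exact of_delete (Set.singleton_nonempty v) (by lia)
  by_cases hconn : Gᶜ.Preconnected
  · exact three_mul_chromaticNumber_le_of_critical (not_exists.1 hα) hconn (by simpa using hcrit) hV
  obtain ⟨A, hA, hAc, hjoin⟩ := exists_forall_adj_of_not_preconnected_compl hconn
  have hcard := A.ncard_add_ncard_compl
  have hχ := toNat_chromaticNumber_le_add_induce G A
  have hω := cliqueNum_induce_add_cliqueNum_induce_compl_le hjoin
  have hχA := toNat_chromaticNumber_le_card (G.induce A)
  have hχAc := toNat_chromaticNumber_le_card (G.induce Aᶜ)
  rw [Nat.card_coe_set_eq] at hχA hχAc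
  have := ih_induce hAc (by lia)
  have := ih_induce (A := Aᶜ) (by rwa [compl_compl]) (by lia)
  lia

end SmallOrder

theorem stmt_9_general {V : Type*} [Fintype V] (G : SimpleGraph V) :
    G.chromaticNumber.toNat + 2 * min (G.chromaticNumber.toNat - G.cliqueNum) 4 ≤
      Fintype.card V := by
  rw [← Nat.card_eq_fintype_card]
  by_contra! hlt
  have := three_mul_chromaticNumber_le G (by lia)
  have := toNat_chromaticNumber_le_card G
  lia

theorem stmt_9 {V : Type*} [Fintype V] (G : SimpleGraph V)
    (h : G.chromaticNumber.toNat - G.cliqueNum ≤ 4) :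
    G.chromaticNumber.toNat + 2 * (G.chromaticNumber.toNat - G.cliqueNum) ≤
      Fintype.card V := by
  simpa only [min_eq_left h] using stmt_9_general G
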